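/- For every m ≥ 2 there exists n ≥ 1 such that there is a Marcello step from the join K_n + N_m (the complete graph on n vertices joined to m pairwise non-adjacent vertices) to the complete graph on its n + m vertices; i.e., there exists n ≥ 1 with ϖ(K_n + N_m) = 1. -/

import Mathlib

open SimpleGraph

attribute [local instance] Classical.propDecidable

/-- The degree of a vertex. -/
noncomputable def mdeg {V : Type*} (G : SimpleGraph V) (v : V) : ℕ :=
  (G.neighborSet v).ncard

/-- `G'` is obtained from `G` by a Marcello step. -/
def MarcelloStep {V : Type*} [Fintype V] (G G' : SimpleGraph V) : Prop :=
  G ≤ G' ∧ ∃ f : Sym2 V → V,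
    (∀ e ∈ G'.edgeSet \ G.edgeSet, f e ∈ e) ∧
    (∀ v : V, (∃ e ∈ G'.edgeSet \ G.edgeSet, f e = v) →
        0 < mdeg G v ∧ mdeg G v < Fintype.card V - 1) ∧
    (∀ v : V, ((G'.edgeSet \ G.edgeSet) ∩ {e | f e = v}).ncard ≤ mdeg G v)

/-- There is a Marcello chain of length `k` from `G` to `H`. -/
def MarcelloChain {V : Type*} [Fintype V] (G H : SimpleGraph V) (k : ℕ) : Prop :=
  ∃ c : ℕ → SimpleGraph V, c 0 = G ∧ c k = H ∧ ∀ i < k, MarcelloStep (c i) (c (i + 1))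

/-- The Marcello number `ϖ(G)`. -/
noncomputable def marcelloNumber {V : Type*} [Fintype V] (G : SimpleGraph V) : ℕ :=
  sInf {k | MarcelloChain G (⊤ : SimpleGraph V) k}

/-- The sum of degrees over vertices `v` with `0 < deg v < n - 1`. -/
noncomputable def marcelloSum {V : Type*} [Fintype V] (G : SimpleGraph V) : ℕ :=
  ∑ v ∈ Finset.univ.filter
      (fun v => 0 < mdeg G v ∧ mdeg G v < Fintype.card V - 1), mdeg G v
/-- The join of two graphs. -/
def graphJoin {α β : Type*} (G : SimpleGraph α) (H : SimpleGraph β) :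
    SimpleGraph (α ⊕ β) :=
  (G ⊕g H) ⊔ completeBipartiteGraph α β

/-!
Suppose `G ≤ G'` and every vertex at most doubles its degree in passing from `G` to `G'`. Then each
vertex is incident to at most `deg_G v` new edges, so *any* choice of initiators is within budget,
and one Marcello step leads from `G` to `G'`. In `K_n + N_m` every vertex of `K_n` already has full
degree, and every vertex of `N_m` has degree `n`, which is at least half of `n + m - 1` as soon as
`m ≤ n + 1`; for instance when `n = m`.
-/

section Degree

variable {V : Type*} {G G' : SimpleGraph V}

theorem ncard_incidenceSet (v : V) : (G.incidenceSet v).ncard = mdeg G v :=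
  Nat.card_congr (G.incidenceSetEquivNeighborSet v)

theorem edgeSet_diff_inter_subset_incidenceSet_diff {f : Sym2 V → V}
    (hf : ∀ e ∈ G'.edgeSet \ G.edgeSet, f e ∈ e) (v : V) :
    (G'.edgeSet \ G.edgeSet) ∩ {e | f e = v} ⊆ G'.incidenceSet v \ G.incidenceSet v := by
  rintro e ⟨he, rfl⟩
  exact ⟨⟨he.1, hf e he⟩, fun h => he.2 h.1⟩

theorem ncard_incidenceSet_diff [Finite V] (hle : G ≤ G') (v : V) :
    (G'.incidenceSet v \ G.incidenceSet v).ncard = mdeg G' v - mdeg G v := by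
  have hsub : G.incidenceSet v ⊆ G'.incidenceSet v := fun _ he => ⟨edgeSet_mono hle he.1, he.2⟩
  rw [Set.ncard_sdiff hsub, ncard_incidenceSet, ncard_incidenceSet]

theorem mdeg_eq_degree (v : V) [Fintype (G.neighborSet v)] : mdeg G v = G.degree v := by
  rw [mdeg, ← Nat.card_coe_set_eq, Nat.card_eq_fintype_card, card_neighborSet_eq_degree]

variable [Fintype V]

theorem mdeg_top (v : V) : mdeg (⊤ : SimpleGraph V) v = Fintype.card V - 1 :=
  (mdeg_eq_degree v).trans (complete_graph_degree v)

theorem mdeg_le_card_sub_one (v : V) : mdeg G v ≤ Fintype.card V - 1 :=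
  mdeg_eq_degree (G := G) v ▸ Nat.le_sub_one_of_lt (G.degree_lt_card_verts v)

end Degree

section Marcello

variable {V : Type*} [Fintype V] {G G' : SimpleGraph V}

theorem marcelloStep_of_mdeg_le_two_mul (hle : G ≤ G') (hdeg : ∀ v, mdeg G' v ≤ 2 * mdeg G v) :
    MarcelloStep G G' := by
  let initiator : Sym2 V → V := fun e => e.out.1
  have initiator_mem (e : Sym2 V) : initiator e ∈ e := e.out_fst_mem
  have initiated_le (v : V) :
      ((G'.edgeSet \ G.edgeSet) ∩ {e | initiator e = v}).ncard ≤ mdeg G' v - mdeg G v :=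
    ncard_incidenceSet_diff hle v ▸ Set.ncard_le_ncard
      (edgeSet_diff_inter_subset_incidenceSet_diff (fun e _ => initiator_mem e) v)
  refine ⟨hle, initiator, fun e _ => initiator_mem e, ?_, fun v => ?_⟩
  · rintro v ⟨e, he, hev⟩
    have initiated_pos : 0 < ((G'.edgeSet \ G.edgeSet) ∩ {e | initiator e = v}).ncard :=
      (Set.ncard_pos).2 ⟨e, he, hev⟩
    have mdeg_lt : mdeg G v < mdeg G' v :=
      Nat.lt_of_sub_pos (initiated_pos.trans_le (initiated_le v))
    have mdeg_pos : 0 < mdeg G v := by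
      have := hdeg v
      omega
    exact ⟨mdeg_pos, mdeg_lt.trans_le (mdeg_le_card_sub_one v)⟩
  · have := hdeg v
    exact (initiated_le v).trans (by omega)

theorem marcelloChain_zero : MarcelloChain G G' 0 ↔ G = G' := by
  constructor
  · rintro ⟨c, rfl, rfl, -⟩
    rfl
  · rintro rfl
    exact ⟨fun _ => G, rfl, rfl, by simp⟩

theorem marcelloChain_one : MarcelloChain G G' 1 ↔ MarcelloStep G G' := by
  constructor
  · rintro ⟨c, rfl, rfl, hstep⟩
    exact hstep 0 one_pos
  · intro hstep
    exact ⟨fun i => if i = 0 then G else G', rfl, rfl, by simpa using hstep⟩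

theorem marcelloNumber_eq_one_iff : marcelloNumber G = 1 ↔ G ≠ ⊤ ∧ MarcelloStep G ⊤ := by
  rw [← marcelloChain_one, Ne, ← marcelloChain_zero]
  constructor
  · intro h
    refine ⟨fun hzero => ?_, ?_⟩
    · have hle : marcelloNumber G ≤ 0 := Nat.sInf_le hzero
      omega
    · exact h ▸ Nat.sInf_mem (Nat.nonempty_of_pos_sInf (h ▸ one_pos))
  · rintro ⟨hzero, hone⟩
    refine le_antisymm (Nat.sInf_le hone) (le_csInf ⟨1, hone⟩ fun k hk => ?_)
    exact Nat.one_le_iff_ne_zero.2 fun hk0 => hzero (hk0 ▸ hk)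

end Marcello

section Join

variable {α β : Type*} {G : SimpleGraph α} {H : SimpleGraph β}

theorem neighborSet_graphJoin_inl (a : α) :
    (graphJoin G H).neighborSet (.inl a) = Sum.inl '' G.neighborSet a ∪ Set.range Sum.inr := by
  ext (x | y) <;> simp [graphJoin]

theorem neighborSet_graphJoin_inr (b : β) :
    (graphJoin G H).neighborSet (.inr b) = Set.range Sum.inl ∪ Sum.inr '' H.neighborSet b := by
  ext (x | y) <;> simp [graphJoin]

theorem right_eq_top_of_graphJoin_eq_top (h : graphJoin G H = ⊤) : H = ⊤ := by
  ext x y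
  have hadj : (graphJoin G H).Adj (.inr x) (.inr y) ↔ x ≠ y := by simp [h]
  simpa [graphJoin] using hadj

section Finite

variable [Finite α] [Finite β]

theorem mdeg_graphJoin_inl (a : α) :
    mdeg (graphJoin G H) (.inl a) = mdeg G a + Nat.card β := by
  have hdisj : Disjoint (Sum.inl '' G.neighborSet a) (Set.range (Sum.inr : β → α ⊕ β)) :=
    Set.isCompl_range_inl_range_inr.disjoint.mono_left (Set.image_subset_range _ _)
  rw [mdeg, neighborSet_graphJoin_inl, Set.ncard_union_eq hdisj,
    Set.ncard_image_of_injective _ Sum.inl_injective,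
    Set.ncard_range_of_injective Sum.inr_injective, mdeg]

theorem mdeg_graphJoin_inr (b : β) :
    mdeg (graphJoin G H) (.inr b) = Nat.card α + mdeg H b := by
  have hdisj : Disjoint (Set.range (Sum.inl : α → α ⊕ β)) (Sum.inr '' H.neighborSet b) :=
    Set.isCompl_range_inl_range_inr.disjoint.mono_right (Set.image_subset_range _ _)
  rw [mdeg, neighborSet_graphJoin_inr, Set.ncard_union_eq hdisj,
    Set.ncard_image_of_injective _ Sum.inr_injective,
    Set.ncard_range_of_injective Sum.inl_injective, mdeg]

end Finite

theorem marcelloStep_graphJoin_top_left [Fintype α] [Fintype β]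
    (hcard : Fintype.card β ≤ Fintype.card α + 1) :
    MarcelloStep (graphJoin (⊤ : SimpleGraph α) H) ⊤ := by
  refine marcelloStep_of_mdeg_le_two_mul le_top ?_
  rintro (a | b)
  · rw [mdeg_top, mdeg_graphJoin_inl, mdeg_top, Nat.card_eq_fintype_card, Fintype.card_sum]
    omega
  · rw [mdeg_top, mdeg_graphJoin_inr, Nat.card_eq_fintype_card, Fintype.card_sum]
    omega

end Join

/-- For every `m ≥ 2` there exists `n ≥ 1` such that one Marcello step completes
`K_n + N_m`, i.e. `ϖ(K_n + N_m) = 1`. -/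
theorem exists_marcello_join_complete_null (m : ℕ) (hm : 2 ≤ m) :
    ∃ n : ℕ, 1 ≤ n ∧
      MarcelloStep (graphJoin (⊤ : SimpleGraph (Fin n)) (⊥ : SimpleGraph (Fin m)))
        (⊤ : SimpleGraph (Fin n ⊕ Fin m)) ∧
      marcelloNumber (graphJoin (⊤ : SimpleGraph (Fin n)) (⊥ : SimpleGraph (Fin m))) = 1 := by
  have : Nontrivial (Fin m) := Fin.nontrivial_iff_two_le.2 hm
  have hstep : MarcelloStep (graphJoin (⊤ : SimpleGraph (Fin m)) (⊥ : SimpleGraph (Fin m))) ⊤ :=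
    marcelloStep_graphJoin_top_left (Nat.le_succ _)
  have hne : graphJoin (⊤ : SimpleGraph (Fin m)) (⊥ : SimpleGraph (Fin m)) ≠ ⊤ :=
    fun h => bot_ne_top (right_eq_top_of_graphJoin_eq_top h)
  exact ⟨m, by omega, hstep, marcelloNumber_eq_one_iff.2 ⟨hne, hstep⟩⟩
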